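/- For every integer n ≥ 5 there exist points v₁, …, vₙ ∈ ℝ² in strictly convex position (listed in counterclockwise order) such that every interior angle of the convex polygon P = conv{v₁, …, vₙ} is strictly greater than π/2, and there exists an external watchman route for {P} whose length is strictly less than the perimeter ∑_{i=1}^{n} ‖v_{i+1} − v_i‖ (indices mod n) of P. In particular, the perimeter of P is not a shortest external watchman route for P. -/

import Mathlib

/-!
The route need not go around `P`. Take a house-shaped polygon with a nearly flat floor, very low walls and a
roof whose two sides have slope `± 3 / 4`: eaves `(± 1000, 75)`, apex `(0, 825)`, and a floor
consisting of `n - 3` points of the parabola `y = x ^ 2 / 100000` with equally spaced abscissae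
from `-960` to `960`. The lines carrying the two roof sides meet the axis `y = 0` at
`(± 1100, 0)`, and the route runs along the segment between these two points and back. Its length
is `4400`, while the perimeter is at least `1920 + 2 * 65 + 2 * 1250 = 4550`.

Visibility (`house_visible`): at a boundary point `q` there is a supporting functional
`f = a x + b y`, and `q` is visible from each `p` with `f q ≤ f p`, because `[p, q]` then misses
the open half-plane `f < f q` containing the interior of `P`. If `b ≤ 0`, the vertical projection
of `q` to the axis is such a point. If `b > 0` and some eave has `f`-value at least that of the
apex, then that eave maximizes `f` on `P`, and the endpoint of the route beyond it is such a
point. In the remaining case `q` is the apex, which is visible along the line of a roof side.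

Strict convexity is certified vertex by vertex by a functional with that vertex as its unique
maximizer (tangents of the parabola on the floor, coordinates at the eaves and the apex), and
obtuseness by the sign of the inner product of consecutive edges (`house_turn`).
-/

open Set Metric ENNReal

noncomputable section

abbrev E2 := EuclideanSpace ℝ (Fin 2)

/-- The planar cross product (signed area form). -/
def cross (a b : E2) : ℝ := a 0 * b 1 - a 1 * b 0

/-! ### Linear functionals on the plane -/

/-- The functional `(x, y) ↦ a x + b y`. -/
def lin (a b : ℝ) : E2 →L[ℝ] ℝ :=
  a • (EuclideanSpace.proj 0 : E2 →L[ℝ] ℝ) + b • (EuclideanSpace.proj 1 : E2 →L[ℝ] ℝ)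

@[simp] lemma lin_apply (a b : ℝ) (p : E2) : lin a b p = a * p 0 + b * p 1 := by
  simp [lin]

lemma exists_eq_lin (f : E2 →L[ℝ] ℝ) : ∃ a b : ℝ, f = lin a b := by
  refine ⟨f (EuclideanSpace.single 0 1), f (EuclideanSpace.single 1 1), ?_⟩
  ext p
  have hp : p = p 0 • EuclideanSpace.single (0 : Fin 2) (1 : ℝ)
      + p 1 • EuclideanSpace.single (1 : Fin 2) (1 : ℝ) := by
    ext i
    fin_cases i <;> simp
  conv_lhs => rw [hp]
  simp only [map_add, map_smul, smul_eq_mul, lin_apply]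
  ring

lemma hull_le {S : Set E2} (f : E2 →L[ℝ] ℝ) {c : ℝ} (h : ∀ p ∈ S, f p ≤ c) {q : E2}
    (hq : q ∈ convexHull ℝ S) : f q ≤ c :=
  convexHull_min (t := {p | f p ≤ c}) h (convex_halfSpace_le f.toLinearMap.isLinear c) hq

lemma hull_lt {S : Set E2} (f : E2 →L[ℝ] ℝ) {c : ℝ} (h : ∀ p ∈ S, f p < c) {q : E2}
    (hq : q ∈ convexHull ℝ S) : f q < c :=
  convexHull_min (t := {p | f p < c}) h (convex_halfSpace_lt f.toLinearMap.isLinear c) hq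

lemma interior_lt {K : Set E2} (f : E2 →L[ℝ] ℝ) (hf : f ≠ 0) {c : ℝ} (h : ∀ p ∈ K, f p ≤ c)
    {q : E2} (hq : q ∈ interior K) : f q < c := by
  have hopen : IsOpen (f '' interior K) := f.isOpenMap_of_ne_zero hf _ isOpen_interior
  have hsub : f '' interior K ⊆ Iic c := by
    rintro _ ⟨p, hp, rfl⟩
    exact h p (interior_subset hp)
  have := interior_maximal hsub hopen ⟨q, hq, rfl⟩
  rwa [interior_Iic] at this

/-- If `f` is strictly smaller than `f T` at every generator other than `T`, then `T` is the only
point of the hull at which `f` can reach `f T`. -/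
lemma hull_eq_of_max {S : Set E2} (f : E2 →L[ℝ] ℝ) {T : E2}
    (h : ∀ p ∈ S, p = T ∨ f p < f T) {q : E2} (hq : q ∈ convexHull ℝ S) (hmax : f T ≤ f q) :
    q = T := by
  have hconv : Convex ℝ {p : E2 | p = T ∨ f p < f T} := by
    intro x hx y hy a b ha hb hab
    have hle : ∀ z : E2, (z = T ∨ f z < f T) → f z ≤ f T := by
      rintro z (rfl | hz)
      · exact le_rfl
      · exact hz.le
    have hb' : b = 1 - a := by linarith
    rcases hx with rfl | hx
    · rcases hy with rfl | hy
      · left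
        rw [← add_smul, hab, one_smul]
      · rcases hb.eq_or_lt with rfl | hb0
        · left
          have : a = 1 := by linarith
          simp [this]
        · right
          simp only [map_add, map_smul, smul_eq_mul]
          subst hb'
          nlinarith
    · rcases ha.eq_or_lt with rfl | ha0
      · have : b = 1 := by linarith
        subst this
        simpa using hy
      · right
        simp only [map_add, map_smul, smul_eq_mul]
        have := hle y hy
        subst hb'
        nlinarith
  rcases convexHull_min (t := {p : E2 | p = T ∨ f p < f T}) h hconv hq with h1 | h1
  · exact h1
  · exact absurd hmax (not_le.mpr h1)

/-- A segment in the half-plane `c ≤ f` misses every set on which `f < c`. -/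
lemma segment_disjoint {U : Set E2} (f : E2 →L[ℝ] ℝ) {c : ℝ} (hU : ∀ x ∈ U, f x < c) {p q : E2}
    (hp : c ≤ f p) (hq : c ≤ f q) : Disjoint (segment ℝ p q) U := by
  rw [Set.disjoint_left]
  intro x hx hxU
  have hc : Convex ℝ {x : E2 | c ≤ f x} := convex_halfSpace_ge f.toLinearMap.isLinear c
  exact absurd (hU x hxU) (not_lt.mpr (hc.segment_subset hp hq hx))

lemma lin_le_norm {a b : ℝ} (hab : a ^ 2 + b ^ 2 = 1) (p : E2) : lin a b p ≤ ‖p‖ := by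
  rw [EuclideanSpace.norm_eq, lin_apply]
  apply Real.le_sqrt_of_sq_le
  simp only [Fin.sum_univ_two, Real.norm_eq_abs, sq_abs]
  nlinarith [sq_nonneg (a * p 1 - b * p 0)]

lemma obtuse_of_dot_neg {p q r : E2}
    (h : (p 0 - q 0) * (r 0 - q 0) + (p 1 - q 1) * (r 1 - q 1) < 0) :
    Real.pi / 2 < EuclideanGeometry.angle p q r := by
  have hin : inner ℝ (p -ᵥ q) (r -ᵥ q) < 0 := by
    simp only [vsub_eq_sub, PiLp.inner_apply, Fin.sum_univ_two, PiLp.sub_apply,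
      RCLike.inner_apply, conj_trivial]
    linarith
  have hp : 0 < ‖p -ᵥ q‖ := by
    rw [norm_pos_iff]
    intro h0
    rw [h0] at hin
    simp at hin
  have hr : 0 < ‖r -ᵥ q‖ := by
    rw [norm_pos_iff]
    intro h0
    rw [h0] at hin
    simp at hin
  rw [EuclideanGeometry.angle, InnerProductGeometry.angle, Real.arccos]
  have := Real.arcsin_lt_zero.mpr (div_neg_of_neg_of_pos hin (mul_pos hp hr))
  linarith

/-! ### The house-shaped polygon -/

/-- The floor point with abscissa `x`. -/
def floorPt (x : ℝ) : E2 := !₂[x, x ^ 2 / 100000]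

/-- The right eave. -/
def eaveR : E2 := !₂[1000, 75]

/-- The apex of the roof. -/
def apex : E2 := !₂[0, 825]

/-- The left eave. -/
def eaveL : E2 := !₂[-1000, 75]

@[simp] lemma floorPt_zero (x : ℝ) : floorPt x 0 = x := rfl
@[simp] lemma floorPt_one (x : ℝ) : floorPt x 1 = x ^ 2 / 100000 := rfl
@[simp] lemma eaveR_zero : eaveR 0 = 1000 := rfl
@[simp] lemma eaveR_one : eaveR 1 = 75 := rfl
@[simp] lemma apex_zero : apex 0 = 0 := rfl
@[simp] lemma apex_one : apex 1 = 825 := rfl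
@[simp] lemma eaveL_zero : eaveL 0 = -1000 := rfl
@[simp] lemma eaveL_one : eaveL 1 = 75 := rfl

/-- The vertices of the house with `k + 5` vertices, counterclockwise: the `k + 2` floor points
from left to right, then the right eave, the apex and the left eave. -/
def house (k i : ℕ) : E2 :=
  if i ≤ k + 1 then floorPt (-960 + 1920 / (k + 1) * i)
  else if i = k + 2 then eaveR else if i = k + 3 then apex else eaveL

lemma house_floor {k i : ℕ} (h : i ≤ k + 1) :
    house k i = floorPt (-960 + 1920 / (k + 1) * i) := by simp [house, h]
lemma house_eaveR (k : ℕ) : house k (k + 2) = eaveR := by simp [house]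
lemma house_apex (k : ℕ) : house k (k + 3) = apex := by simp [house]
lemma house_eaveL (k : ℕ) : house k (k + 4) = eaveL := by simp [house]
lemma house_first (k : ℕ) : house k 0 = floorPt (-960) := by simp [house]
lemma house_last (k : ℕ) : house k (k + 1) = floorPt 960 := by
  have : (k : ℝ) + 1 ≠ 0 := by positivity
  rw [house_floor le_rfl]
  congr 1
  push_cast
  field_simp
  norm_num

/-- The vertices of the house, as an indexed family. -/
def houseV (k : ℕ) (i : Fin (k + 5)) : E2 := house k i

lemma floor_bounds {k i : ℕ} (h : i ≤ k + 1) :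
    -960 ≤ (-960 + 1920 / (k + 1) * i : ℝ) ∧ (-960 + 1920 / (k + 1) * i : ℝ) ≤ 960 := by
  have hk : (0 : ℝ) < k + 1 := by positivity
  have hi : (i : ℝ) ≤ k + 1 := by exact_mod_cast h
  have hd : (0 : ℝ) < 1920 / (k + 1) := by positivity
  have hdk : (1920 / (k + 1) : ℝ) * (k + 1) = 1920 := by field_simp
  constructor
  · have : (0 : ℝ) ≤ 1920 / (k + 1) * i := by positivity
    linarith
  · nlinarith

lemma mem_houseV {k : ℕ} {p : E2} (hp : p ∈ range (houseV k)) :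
    (∃ x : ℝ, -960 ≤ x ∧ x ≤ 960 ∧ p = floorPt x) ∨ p = eaveR ∨ p = apex ∨ p = eaveL := by
  obtain ⟨i, rfl⟩ := hp
  by_cases h : (i : ℕ) ≤ k + 1
  · exact Or.inl ⟨_, (floor_bounds h).1, (floor_bounds h).2, house_floor h⟩
  · right
    simp only [houseV, house, h, if_false]
    split_ifs <;> simp

/-- The left turn and the obtuse angle at the middle point of a triple `p, q, r`, in
coordinates. -/
def Turn (p q r : E2) : Prop :=
  0 < cross (q - p) (r - q) ∧ (p 0 - q 0) * (r 0 - q 0) + (p 1 - q 1) * (r 1 - q 1) < 0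

lemma turn_floor {a d : ℝ} (hd : 0 < d) (ha : -960 ≤ a) (hb : a + 2 * d ≤ 960) :
    Turn (floorPt a) (floorPt (a + d)) (floorPt (a + 2 * d)) := by
  simp only [Turn, cross, PiLp.sub_apply, floorPt_zero, floorPt_one]
  constructor
  · have : 0 < d ^ 3 := by positivity
    nlinarith
  · have h1 : 0 < d ^ 2 := by positivity
    have h2 : 0 < 1 + (2 * a + d) * (2 * a + 3 * d) / 10000000000 := by
      nlinarith [sq_nonneg (2 * a + 2 * d)]
    have := mul_pos h1 h2
    nlinarith

lemma turn_last {d : ℝ} (hd : 0 < d) (hd' : d ≤ 1920) :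
    Turn (floorPt (960 - d)) (floorPt 960) eaveR := by
  simp only [Turn, cross, PiLp.sub_apply, floorPt_zero, floorPt_one, eaveR_zero, eaveR_one]
  constructor <;> nlinarith

lemma turn_first {d : ℝ} (hd : 0 < d) (hd' : d ≤ 1920) :
    Turn eaveL (floorPt (-960)) (floorPt (-960 + d)) := by
  simp only [Turn, cross, PiLp.sub_apply, floorPt_zero, floorPt_one, eaveL_zero, eaveL_one]
  constructor <;> nlinarith

lemma add_one_val {k : ℕ} (i : Fin (k + 5)) :
    ((i + 1 : Fin (k + 5)) : ℕ) = if (i : ℕ) = k + 4 then 0 else (i : ℕ) + 1 := by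
  rw [Fin.val_add_one]
  simp [Fin.ext_iff]

lemma add_two_eq {k : ℕ} (i : Fin (k + 5)) : i + 2 = i + 1 + 1 := by
  rw [add_assoc]
  congr 1

lemma house_turn (k : ℕ) (i : Fin (k + 5)) :
    Turn (houseV k i) (houseV k (i + 1)) (houseV k (i + 2)) := by
  have hk : (0 : ℝ) < k + 1 := by positivity
  have hd : (0 : ℝ) < 1920 / (k + 1) := by positivity
  have hdk : (1920 / (k + 1) : ℝ) * (k + 1) = 1920 := by field_simp
  have hd' : (1920 / (k + 1) : ℝ) ≤ 1920 := by
    have : (0 : ℝ) ≤ k := by positivity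
    nlinarith
  rw [add_two_eq]
  simp only [houseV, add_one_val]
  have hi := i.isLt
  generalize (i : ℕ) = j at hi
  rcases (by omega : j + 2 ≤ k + 1 ∨ j = k ∨ j = k + 1 ∨ j = k + 2 ∨ j = k + 3 ∨ j = k + 4) with
    h | rfl | rfl | rfl | rfl | rfl
  · rw [if_neg (by omega : ¬ j = k + 4), if_neg (by omega : ¬ j + 1 = k + 4)]
    have h0 := floor_bounds (k := k) (i := j) (by omega)
    have h2 := floor_bounds (k := k) (i := j + 2) h
    rw [house_floor (by omega), house_floor (by omega), house_floor (by omega)]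
    have := turn_floor hd h0.1 (by push_cast at h2; linarith [h2.2])
    convert this using 2 <;> push_cast <;> ring
  · have := turn_last hd hd'
    simp only [show ¬ j = j + 4 by omega, show ¬ j + 1 = j + 4 by omega, if_false]
    rw [house_last, house_eaveR, house_floor (by omega)]
    convert this using 2
    linarith
  · simp only [show ¬ k + 1 = k + 4 by omega, show ¬ k + 1 + 1 = k + 4 by omega, if_false]
    rw [house_last, house_eaveR, house_apex]
    norm_num [Turn, cross]
  · simp only [show ¬ k + 2 = k + 4 by omega, show ¬ k + 2 + 1 = k + 4 by omega, if_false]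
    rw [house_eaveR, house_apex, house_eaveL]
    norm_num [Turn, cross]
  · simp only [show ¬ k + 3 = k + 4 by omega, if_true, if_false]
    rw [house_apex, house_eaveL, house_first]
    norm_num [Turn, cross]
  · simp only [show ¬ 0 = k + 4 by omega, if_true, if_false]
    rw [house_eaveL, house_first, house_floor (by omega)]
    have := turn_first hd hd'
    convert this using 2
    simp

/-- Every vertex is the unique maximizer of some linear functional. -/
lemma house_exposed (k : ℕ) (i : Fin (k + 5)) :
    houseV k i ∉ convexHull ℝ (houseV k '' {j | j ≠ i}) := by
  suffices h : ∃ f : E2 →L[ℝ] ℝ, ∀ j, j ≠ i → f (houseV k j) < f (houseV k i) by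
    obtain ⟨f, hf⟩ := h
    intro hmem
    refine lt_irrefl _ (hull_lt f (c := f (houseV k i)) ?_ hmem)
    rintro _ ⟨j, hj, rfl⟩
    exact hf j hj
  have hd : (0 : ℝ) < 1920 / (k + 1) := by positivity
  have key : ∀ j : Fin (k + 5), j ≠ i → (j : ℕ) ≠ i := fun j hj h => hj (Fin.ext h)
  have hi := i.isLt
  rcases (by omega : (i : ℕ) ≤ k + 1 ∨ (i : ℕ) = k + 2 ∨ (i : ℕ) = k + 3 ∨ (i : ℕ) = k + 4) with
    h | h | h | h
  -- On the floor: the tangent of the parabola at the vertex.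
  · refine ⟨lin (2 * (-960 + 1920 / (k + 1) * (i : ℕ)) / 100000) (-1), fun j hj => ?_⟩
    have hji := key j hj
    have hb := floor_bounds h
    have hlt := j.isLt
    simp only [houseV]
    rw [house_floor h]
    rcases (by omega : (j : ℕ) ≤ k + 1 ∨ (j : ℕ) = k + 2 ∨ (j : ℕ) = k + 3 ∨ (j : ℕ) = k + 4) with
      h' | h' | h' | h'
    · rw [house_floor h']
      simp only [lin_apply, floorPt_zero, floorPt_one]
      have hne : (1920 / (k + 1) : ℝ) * ((j : ℕ) - (i : ℕ)) ≠ 0 :=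
        mul_ne_zero hd.ne' (sub_ne_zero.mpr (by exact_mod_cast hji))
      have := sq_pos_of_ne_zero hne
      nlinarith
    · rw [h', house_eaveR]
      simp only [lin_apply, floorPt_zero, floorPt_one, eaveR_zero, eaveR_one]
      nlinarith
    · rw [h', house_apex]
      simp only [lin_apply, floorPt_zero, floorPt_one, apex_zero, apex_one]
      nlinarith
    · rw [h', house_eaveL]
      simp only [lin_apply, floorPt_zero, floorPt_one, eaveL_zero, eaveL_one]
      nlinarith
  · refine ⟨lin 1 0, fun j hj => ?_⟩
    have hji := key j hj
    have hlt := j.isLt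
    simp only [houseV]
    rw [h, house_eaveR]
    rcases (by omega : (j : ℕ) ≤ k + 1 ∨ (j : ℕ) = k + 3 ∨ (j : ℕ) = k + 4) with h' | h' | h'
    · have := floor_bounds h'
      rw [house_floor h']
      simp only [lin_apply, floorPt_zero, floorPt_one, eaveR_zero]
      linarith [this.2]
    · rw [h', house_apex]
      norm_num
    · rw [h', house_eaveL]
      norm_num
  · refine ⟨lin 0 1, fun j hj => ?_⟩
    have hji := key j hj
    have hlt := j.isLt
    simp only [houseV]
    rw [h, house_apex]
    rcases (by omega : (j : ℕ) ≤ k + 1 ∨ (j : ℕ) = k + 2 ∨ (j : ℕ) = k + 4) with h' | h' | h'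
    · have := floor_bounds h'
      rw [house_floor h']
      simp only [lin_apply, floorPt_zero, floorPt_one, apex_zero, apex_one]
      nlinarith
    · rw [h', house_eaveR]
      norm_num
    · rw [h', house_eaveL]
      norm_num
  · refine ⟨lin (-1) 0, fun j hj => ?_⟩
    have hji := key j hj
    have hlt := j.isLt
    simp only [houseV]
    rw [h, house_eaveL]
    rcases (by omega : (j : ℕ) ≤ k + 1 ∨ (j : ℕ) = k + 2 ∨ (j : ℕ) = k + 3) with h' | h' | h'
    · have := floor_bounds h'
      rw [house_floor h']
      simp only [lin_apply, floorPt_zero, floorPt_one, eaveL_zero]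
      linarith [this.1]
    · rw [h', house_eaveR]
      norm_num
    · rw [h', house_apex]
      norm_num

/-- Each edge is at least as long as its component in a suitable direction: the floor edges
add up to `1920`, the walls count `65` each, the roof sides `1250` each. -/
lemma house_perimeter (k : ℕ) :
    4400 < ∑ i : Fin (k + 5), ‖houseV k (i + 1) - houseV k i‖ := by
  let L : ℕ → ℝ := fun j => if j ≤ k then 1920 / (k + 1) else
    if j = k + 1 then 65 else if j = k + 2 then 1250 else if j = k + 3 then 1250 else 65
  have hL : ∀ i : Fin (k + 5), L i ≤ ‖houseV k (i + 1) - houseV k i‖ := by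
    intro i
    simp only [houseV, add_one_val]
    have hi := i.isLt
    generalize (i : ℕ) = j at hi
    rcases (by omega : j ≤ k ∨ j = k + 1 ∨ j = k + 2 ∨ j = k + 3 ∨ j = k + 4) with
      h | rfl | rfl | rfl | rfl
    · rw [if_neg (by omega : ¬ j = k + 4)]
      refine le_trans (le_of_eq ?_) (lin_le_norm (a := 1) (b := 0) (by norm_num) _)
      rw [house_floor (by omega), house_floor (by omega)]
      simp only [L, h, if_true, lin_apply, PiLp.sub_apply, floorPt_zero]
      push_cast
      ring
    · refine le_trans ?_ (lin_le_norm (a := 0) (b := 1) (by norm_num) _)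
      simp only [show ¬ k + 1 = k + 4 by omega, if_false]
      rw [house_last, house_eaveR]
      norm_num [L]
    · refine le_trans ?_ (lin_le_norm (a := -4 / 5) (b := 3 / 5) (by norm_num) _)
      simp only [show ¬ k + 2 = k + 4 by omega, if_false]
      rw [house_apex, house_eaveR]
      norm_num [L]
    · refine le_trans ?_ (lin_le_norm (a := -4 / 5) (b := -3 / 5) (by norm_num) _)
      simp only [show ¬ k + 3 = k + 4 by omega, if_false]
      rw [house_apex, house_eaveL]
      norm_num [L]
    · refine le_trans ?_ (lin_le_norm (a := 0) (b := -1) (by norm_num) _)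
      simp only [if_true]
      rw [house_first, house_eaveL]
      norm_num [L]
  refine lt_of_lt_of_le ?_ (Finset.sum_le_sum fun i _ => hL i)
  rw [Fin.sum_univ_eq_sum_range L (k + 5)]
  have hfl : ∑ j ∈ Finset.range (k + 1), L j = 1920 := by
    have : ∀ j ∈ Finset.range (k + 1), L j = 1920 / (k + 1) := by
      intro j hj
      have : j ≤ k := by
        have := Finset.mem_range.mp hj
        omega
      simp [L, this]
    rw [Finset.sum_congr rfl this, Finset.sum_const, Finset.card_range, nsmul_eq_mul]
    push_cast
    field_simp
  rw [Finset.sum_range_succ, Finset.sum_range_succ, Finset.sum_range_succ, Finset.sum_range_succ,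
    hfl]
  norm_num [L]

/-! ### The route -/

/-- The route: from `(-1100, 0)` straight to `(1100, 0)` and back. -/
def route (t : ℝ) : E2 := !₂[1100 - 4400 * |t - 1 / 2|, 0]

@[simp] lemma route_zero (t : ℝ) : route t 0 = 1100 - 4400 * |t - 1 / 2| := rfl
@[simp] lemma route_one (t : ℝ) : route t 1 = 0 := rfl

lemma route_lipschitz : LipschitzWith 4400 route := by
  refine LipschitzWith.of_dist_le_mul fun s t => ?_
  rw [EuclideanSpace.dist_eq, Real.dist_eq]
  apply Real.sqrt_le_iff.mpr
  have h := abs_abs_sub_abs_le_abs_sub (s - 1 / 2) (t - 1 / 2)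
  rw [show s - 1 / 2 - (t - 1 / 2) = s - t by ring] at h
  refine ⟨by positivity, ?_⟩
  simp only [Fin.sum_univ_two, Real.dist_eq, route_zero, route_one, sq_abs]
  have h2 : (|s - 1 / 2| - |t - 1 / 2|) ^ 2 ≤ |s - t| ^ 2 := by
    rw [← sq_abs (|s - 1 / 2| - |t - 1 / 2|)]
    gcongr
  push_cast
  nlinarith

lemma route_length : eVariationOn route (Icc 0 1) ≤ ENNReal.ofReal 4400 := by
  have h1 := (route_lipschitz.lipschitzOnWith (s := univ)).comp_eVariationOn_le
    (g := (id : ℝ → ℝ)) (s := Icc 0 1) (mapsTo_univ _ _)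
  have h2 : eVariationOn (id : ℝ → ℝ) (Icc 0 1) ≤ ENNReal.ofReal (1 - 0) := by
    simp
  refine h1.trans ?_
  calc ((4400 : NNReal) : ENNReal) * eVariationOn (id : ℝ → ℝ) (Icc 0 1)
      ≤ ((4400 : NNReal) : ENNReal) * ENNReal.ofReal (1 - 0) := by gcongr
    _ = ENNReal.ofReal 4400 := by simp

lemma exists_route {x : ℝ} (h1 : -1100 ≤ x) (h2 : x ≤ 1100) :
    ∃ t ∈ Icc (0 : ℝ) 1, route t = !₂[x, 0] := by
  refine ⟨(x + 1100) / 4400, ⟨by linarith, by linarith⟩, ?_⟩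
  rw [route, abs_of_nonpos (by linarith)]
  congr 2
  ring

lemma route_disjoint (k : ℕ) :
    Disjoint (route '' Icc 0 1) (interior (convexHull ℝ (range (houseV k)))) := by
  rw [Set.disjoint_left]
  rintro _ ⟨t, -, rfl⟩ hint
  have hne : lin 0 (-1) ≠ 0 := by
    intro h
    have := congrArg (fun f : E2 →L[ℝ] ℝ => f apex) h
    norm_num at this
  have hle : ∀ p ∈ convexHull ℝ (range (houseV k)), lin 0 (-1) p ≤ 0 := by
    intro p hp
    refine hull_le _ (fun r hr => ?_) hp
    rcases mem_houseV hr with ⟨x, -, -, rfl⟩ | rfl | rfl | rfl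
    · simp only [lin_apply, floorPt_zero, floorPt_one]
      nlinarith [sq_nonneg x]
    all_goals norm_num
  have := interior_lt _ hne hle hint
  simp at this

lemma house_visible (k : ℕ) {q : E2} (hq : q ∈ frontier (convexHull ℝ (range (houseV k)))) :
    ∃ t ∈ Icc (0 : ℝ) 1,
      Disjoint (segment ℝ (route t) q) (interior (convexHull ℝ (range (houseV k)))) := by
  have hconv : Convex ℝ (convexHull ℝ (range (houseV k))) := convex_convexHull ℝ _
  have hclosed : IsClosed (convexHull ℝ (range (houseV k))) :=
    (finite_range (houseV k)).isClosed_convexHull ℝ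
  have hqK : q ∈ convexHull ℝ (range (houseV k)) := hclosed.frontier_subset hq
  have hqI : q ∉ interior (convexHull ℝ (range (houseV k))) := hq.2
  rcases (interior (convexHull ℝ (range (houseV k)))).eq_empty_or_nonempty with he | hne
  · exact ⟨0, by simp, by simp [he]⟩
  obtain ⟨f, hf⟩ := geometric_hahn_banach_open_point hconv.interior isOpen_interior hqI
  have hfK : ∀ p ∈ convexHull ℝ (range (houseV k)), f p ≤ f q := by
    intro p hp
    have hp' : p ∈ closure (interior (convexHull ℝ (range (houseV k)))) := by
      rw [hconv.closure_interior_eq_closure_of_nonempty_interior hne]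
      exact subset_closure hp
    exact closure_minimal (t := {p | f p ≤ f q}) (fun x hx => (hf x hx).le)
      (isClosed_le f.continuous continuous_const) hp'
  obtain ⟨a, b, rfl⟩ := exists_eq_lin f
  have hR : lin (3 / 4) 1 ≠ 0 := by
    intro h
    have := congrArg (fun f : E2 →L[ℝ] ℝ => f apex) h
    norm_num at this
  have hapex : apex ∈ convexHull ℝ (range (houseV k)) :=
    subset_convexHull ℝ _ ⟨⟨k + 3, by omega⟩, house_apex k⟩
  rcases le_or_gt b 0 with hb | hb
  -- The supporting line has `P` above it: look from the point of the axis below `q`.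
  · have hx1 : lin 1 0 q ≤ 1000 := by
      refine hull_le _ (fun r hr => ?_) hqK
      rcases mem_houseV hr with ⟨x, h1, h2, rfl⟩ | rfl | rfl | rfl
      · simp only [lin_apply, floorPt_zero, floorPt_one]
        linarith
      all_goals norm_num
    have hx2 : lin (-1) 0 q ≤ 1000 := by
      refine hull_le _ (fun r hr => ?_) hqK
      rcases mem_houseV hr with ⟨x, h1, h2, rfl⟩ | rfl | rfl | rfl
      · simp only [lin_apply, floorPt_zero, floorPt_one]
        linarith
      all_goals norm_num
    have hy : lin 0 (-1) q ≤ 0 := by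
      refine hull_le _ (fun r hr => ?_) hqK
      rcases mem_houseV hr with ⟨x, -, -, rfl⟩ | rfl | rfl | rfl
      · simp only [lin_apply, floorPt_zero, floorPt_one]
        nlinarith [sq_nonneg x]
      all_goals norm_num
    simp only [lin_apply] at hx1 hx2 hy
    obtain ⟨t, ht, hrt⟩ := exists_route (x := q 0) (by linarith) (by linarith)
    refine ⟨t, ht, segment_disjoint _ hf ?_ le_rfl⟩
    rw [hrt]
    have : b * q 1 ≤ 0 := mul_nonpos_of_nonpos_of_nonneg hb (by linarith)
    simp only [lin_apply, Matrix.cons_val_zero, Matrix.cons_val_one]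
    linarith
  have hfloor : ∀ x : ℝ, -960 ≤ x → x ≤ 960 →
      lin a b (floorPt x) < a * 1000 + b * 75 ∨ lin a b (floorPt x) < a * (-1000) + b * 75 := by
    intro x h1 h2
    have hy : b * (x ^ 2 / 100000) < b * 75 := by
      apply mul_lt_mul_of_pos_left _ hb
      nlinarith
    simp only [lin_apply, floorPt_zero, floorPt_one]
    rcases le_total 0 a with ha | ha
    · left
      nlinarith
    · right
      nlinarith
  rcases le_or_gt (b * 825) (a * 1000 + b * 75) with h1 | h1
  · obtain ⟨t, ht, hrt⟩ := exists_route (x := 1100) (by norm_num) le_rfl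
    refine ⟨t, ht, segment_disjoint _ hf ?_ le_rfl⟩
    rw [hrt]
    have hle : lin a b q ≤ a * 1100 := by
      refine hull_le _ (fun r hr => ?_) hqK
      rcases mem_houseV hr with ⟨x, hx1, hx2, rfl⟩ | rfl | rfl | rfl
      · rcases hfloor x hx1 hx2 with h | h <;> linarith
      all_goals
        norm_num
        linarith
    simpa using hle
  rcases le_or_gt (b * 825) (a * (-1000) + b * 75) with h2 | h2
  · obtain ⟨t, ht, hrt⟩ := exists_route (x := -1100) le_rfl (by norm_num)
    refine ⟨t, ht, segment_disjoint _ hf ?_ le_rfl⟩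
    rw [hrt]
    have hle : lin a b q ≤ a * (-1100) := by
      refine hull_le _ (fun r hr => ?_) hqK
      rcases mem_houseV hr with ⟨x, hx1, hx2, rfl⟩ | rfl | rfl | rfl
      · rcases hfloor x hx1 hx2 with h | h <;> linarith
      all_goals
        norm_num
        linarith
    simpa using hle
  have hqa : q = apex := by
    refine hull_eq_of_max (lin a b) (fun r hr => ?_) hqK (hfK _ hapex)
    rcases mem_houseV hr with ⟨x, hx1, hx2, rfl⟩ | rfl | rfl | rfl
    · right
      have : lin a b apex = b * 825 := by simp
      rw [this]
      rcases hfloor x hx1 hx2 with h | h <;> linarith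
    · right
      simpa using h1
    · exact Or.inl rfl
    · right
      simpa using h2
  subst hqa
  obtain ⟨t, ht, hrt⟩ := exists_route (x := 1100) (by norm_num) le_rfl
  have hroof : ∀ p ∈ convexHull ℝ (range (houseV k)), lin (3 / 4) 1 p ≤ 825 := by
    intro p hp
    refine hull_le _ (fun r hr => ?_) hp
    rcases mem_houseV hr with ⟨x, hx1, hx2, rfl⟩ | rfl | rfl | rfl
    · simp only [lin_apply, floorPt_zero, floorPt_one]
      nlinarith
    all_goals norm_num
  refine ⟨t, ht, segment_disjoint (lin (3 / 4) 1) (c := 825)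
    (fun x hx => interior_lt _ hR hroof hx) ?_ ?_⟩
  · rw [hrt]
    norm_num
  · norm_num

/-- For every `n ≥ 5` there is a convex polygon with `n` vertices (in strictly
convex position, listed counterclockwise) with all interior angles strictly
obtuse, admitting an external watchman route strictly shorter than its
perimeter. -/
theorem obtuse_polygon_perimeter_not_optimal (n : ℕ) (hn : 5 ≤ n) :
    haveI : NeZero n := ⟨by omega⟩
    ∃ v : Fin n → E2,
      (∀ i : Fin n, v i ∉ convexHull ℝ (v '' {j | j ≠ i})) ∧
      (∀ i : Fin n, 0 < cross (v (i + 1) - v i) (v (i + 2) - v (i + 1))) ∧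
      (∀ i : Fin n, Real.pi / 2 < EuclideanGeometry.angle (v (i - 1)) (v i) (v (i + 1))) ∧
      (∃ γ : ℝ → E2, ContinuousOn γ (Set.Icc 0 1) ∧ γ 0 = γ 1 ∧
        Disjoint (γ '' Set.Icc 0 1) (interior (convexHull ℝ (Set.range v))) ∧
        (∀ q ∈ frontier (convexHull ℝ (Set.range v)), ∃ t ∈ Set.Icc (0 : ℝ) 1,
          Disjoint (segment ℝ (γ t) q) (interior (convexHull ℝ (Set.range v)))) ∧
        eVariationOn γ (Set.Icc 0 1) <
          ENNReal.ofReal (∑ i : Fin n, ‖v (i + 1) - v i‖)) := by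
  obtain ⟨k, rfl⟩ := Nat.exists_eq_add_of_le' hn
  refine ⟨houseV k, house_exposed k, fun i => ?_, fun i => ?_, route,
    route_lipschitz.continuous.continuousOn, ?_, route_disjoint k,
    fun q hq => house_visible k hq, ?_⟩
  · have h := (house_turn k i).1
    rwa [add_two_eq] at h ⊢
  · have h := (house_turn k (i - 1)).2
    rw [add_two_eq, sub_add_cancel] at h
    exact obtuse_of_dot_neg h
  · norm_num [route]
  · refine route_length.trans_lt ?_
    rw [ENNReal.ofReal_lt_ofReal_iff_of_nonneg (by norm_num)]
    exact house_perimeter k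

end
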